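/- Let K be a finite nonempty type, p : K → ℝ a probability vector (p x ≥ 0, Σ p x = 1), and for each x ∈ K let σ_x and τ_x be positive definite states in M_n(ℂ). Set σ̄ := Σ_x p x • σ_x and τ̄ := Σ_x p x • τ_x, and assume σ̄ and τ̄ are positive definite. If for every x one has Re(tr((σ_x − τ_x) * log τ_x)) = Re(tr((σ_x − τ_x) * log τ̄)), then (H(σ̄) − Σ_x p x · H(σ_x)) − (H(τ̄) − Σ_x p x · H(τ_x)) ≤ Σ_x p x · D(σ_x‖τ_x). -/

import Mathlib

open scoped ComplexOrder

/-- The matrix logarithm of a (positive definite) matrix, via the continuous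
functional calculus. -/
noncomputable def matLog {n : Type*} [Fintype n] [DecidableEq n]
    (ρ : Matrix n n ℂ) : Matrix n n ℂ :=
  cfc Real.log ρ

/-- The von Neumann entropy of a (positive semidefinite) matrix. -/
noncomputable def vNEntropy {n : Type*} [Fintype n] [DecidableEq n]
    (ρ : Matrix n n ℂ) : ℝ :=
  (Matrix.trace (cfc Real.negMulLog ρ)).re

/-- The quantum relative entropy of (positive definite) matrices. -/
noncomputable def relEntropy {n : Type*} [Fintype n] [DecidableEq n]
    (ρ σ : Matrix n n ℂ) : ℝ :=
  (Matrix.trace (ρ * (matLog ρ - matLog σ))).re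

/-!
Write `σ̄ = ∑ p x • σ x` and `τ̄ = ∑ p x • τ x`. The relative entropy is the Bregman divergence of
the negative entropy: `H ρ - H σ = -D(ρ‖σ) - Re tr ((ρ - σ) log σ)`. Subtracting the `p`-average of
this identity at the pairs `(σ x, τ x)` from the identity at `(σ̄, τ̄)` gives
`∑ p x * D(σ x‖τ x) - D(σ̄‖τ̄)` plus the linear terms
`∑ p x * Re tr ((σ x - τ x) log (τ x)) - Re tr ((σ̄ - τ̄) log τ̄)`, which cancel by hypothesis,
while `D(σ̄‖τ̄) ≥ 0` by Klein's inequality: expanding the traces in the eigenbases of both matrices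
reduces this to the statement that the graph of `x log x` lies above its tangents.
-/

section TraceInequality

variable {𝕜 n : Type*} [RCLike 𝕜] [Fintype n] [DecidableEq n] {A B : Matrix n n 𝕜}

/-- The squared overlap `‖⟪uᵢ, vⱼ⟫‖ ^ 2` of eigenvectors of two Hermitian matrices, encoded as an
entry of the unitary matrix changing one eigenbasis into the other. These are the weights that turn
traces of products into double sums over the two spectra. -/
noncomputable def eigenvectorOverlap (hA : A.IsHermitian) (hB : B.IsHermitian) (i j : n) : ℝ :=
  ‖(star (hA.eigenvectorUnitary : Matrix n n 𝕜) * hB.eigenvectorUnitary) i j‖ ^ 2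

theorem eigenvectorOverlap_nonneg (hA : A.IsHermitian) (hB : B.IsHermitian) (i j : n) :
    0 ≤ eigenvectorOverlap hA hB i j :=
  sq_nonneg _

theorem trace_diagonal_mul_mul_diagonal_mul_conjTranspose {m : Type*} [Fintype m] [DecidableEq m]
    (a : m → ℝ) (b : n → ℝ) (W : Matrix m n 𝕜) :
    (Matrix.diagonal (fun i => (a i : 𝕜)) * W *
        (Matrix.diagonal (fun j => (b j : 𝕜)) * W.conjTranspose)).trace =
      ((∑ i, ∑ j, a i * b j * ‖W i j‖ ^ 2 : ℝ) : 𝕜) := by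
  simp only [Matrix.trace, Matrix.diag, map_sum, map_mul, map_pow]
  refine Finset.sum_congr rfl fun i _ => ?_
  rw [Matrix.mul_apply]
  refine Finset.sum_congr rfl fun j _ => ?_
  rw [Matrix.diagonal_mul, Matrix.diagonal_mul, Matrix.conjTranspose_apply, RCLike.star_def]
  linear_combination (a i * b j : 𝕜) * RCLike.mul_conj (W i j)

theorem trace_cfc_mul_cfc (hA : A.IsHermitian) (hB : B.IsHermitian) (f g : ℝ → ℝ) :
    (cfc f A * cfc g B).trace =
      ((∑ i, ∑ j, f (hA.eigenvalues i) * g (hB.eigenvalues j) *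
        eigenvectorOverlap hA hB i j : ℝ) : 𝕜) := by
  simp only [eigenvectorOverlap]
  rw [← trace_diagonal_mul_mul_diagonal_mul_conjTranspose, hA.cfc_eq, hB.cfc_eq,
    Matrix.IsHermitian.cfc, Matrix.IsHermitian.cfc, Unitary.conjStarAlgAut_apply,
    Unitary.conjStarAlgAut_apply, Matrix.mul_assoc, Matrix.mul_assoc, Matrix.trace_mul_comm]
  simp only [← Matrix.star_eq_conjTranspose, star_mul, star_star, Matrix.mul_assoc,
    Function.comp_def]

theorem cfc_id_mul (hA : A.IsHermitian) (f : ℝ → ℝ) : cfc (fun x => x * f x) A = A * cfc f A := by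
  have hf : ContinuousOn f (spectrum ℝ A) := Matrix.finite_real_spectrum.continuousOn f
  rw [cfc_mul (fun x => x) f A continuousOn_id hf, cfc_id' ℝ A hA.isSelfAdjoint]

theorem klein_inequality (hA : A.IsHermitian) (hB : B.IsHermitian) {f f' : ℝ → ℝ}
    (hff' : ∀ a ∈ spectrum ℝ A, ∀ b ∈ spectrum ℝ B, f b + (a - b) * f' b ≤ f a) :
    RCLike.re (cfc f B).trace + RCLike.re ((A - B) * cfc f' B).trace ≤
      RCLike.re (cfc f A).trace := by
  have trace_fA := trace_cfc_mul_cfc hA hB f 1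
  have trace_fB := trace_cfc_mul_cfc hA hB 1 f
  have trace_A_mul := trace_cfc_mul_cfc hA hB (fun x => x) f'
  have trace_B_mul := trace_cfc_mul_cfc hA hB 1 (fun x => x * f' x)
  rw [cfc_one ℝ B hB.isSelfAdjoint, mul_one] at trace_fA
  rw [cfc_one ℝ A hA.isSelfAdjoint, one_mul] at trace_fB
  rw [cfc_id' ℝ A hA.isSelfAdjoint] at trace_A_mul
  rw [cfc_one ℝ A hA.isSelfAdjoint, one_mul, cfc_id_mul hB] at trace_B_mul
  simp only [Matrix.sub_mul, Matrix.trace_sub, map_sub, trace_fA, trace_fB, trace_A_mul,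
    trace_B_mul, RCLike.ofReal_re, ← Finset.sum_sub_distrib, ← Finset.sum_add_distrib]
  refine Finset.sum_le_sum fun i _ => Finset.sum_le_sum fun j _ => ?_
  have pointwise := mul_le_mul_of_nonneg_right
    (hff' _ (hA.eigenvalues_mem_spectrum_real i) _ (hB.eigenvalues_mem_spectrum_real j))
    (eigenvectorOverlap_nonneg hA hB i j)
  simp only [Pi.one_apply]
  linarith

end TraceInequality

theorem mul_log_add_sub_mul_log_add_one_le {a b : ℝ} (ha : 0 ≤ a) (hb : 0 < b) :
    b * Real.log b + (a - b) * (Real.log b + 1) ≤ a * Real.log a := by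
  have hkl := mul_nonneg hb.le (InformationTheory.klFun_nonneg (div_nonneg ha hb.le))
  have hlog : a * Real.log (a / b) = a * Real.log a - a * Real.log b := by
    rcases ha.eq_or_lt with rfl | ha
    · simp
    · rw [Real.log_div ha.ne' hb.ne', mul_sub]
  have expand : b * InformationTheory.klFun (a / b) = a * Real.log (a / b) + b - a := by
    rw [InformationTheory.klFun_apply]
    field_simp
  linarith

section Entropy

variable {n : Type*} [Fintype n] [DecidableEq n] {ρ σ : Matrix n n ℂ}

theorem vNEntropy_eq_neg_re_trace_cfc_mul_log (ρ : Matrix n n ℂ) :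
    vNEntropy ρ = -(cfc (fun x => x * Real.log x) ρ).trace.re := by
  rw [vNEntropy, Real.negMulLog_eq_neg, cfc_neg, Matrix.trace_neg, Complex.neg_re]

theorem vNEntropy_eq_neg_re_trace_mul_matLog (hρ : ρ.IsHermitian) :
    vNEntropy ρ = -(ρ * matLog ρ).trace.re := by
  rw [vNEntropy_eq_neg_re_trace_cfc_mul_log, cfc_id_mul hρ, matLog]

theorem vNEntropy_sub_vNEntropy (hρ : ρ.IsHermitian) (hσ : σ.IsHermitian) :
    vNEntropy ρ - vNEntropy σ = -relEntropy ρ σ - ((ρ - σ) * matLog σ).trace.re := by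
  rw [vNEntropy_eq_neg_re_trace_mul_matLog hρ, vNEntropy_eq_neg_re_trace_mul_matLog hσ, relEntropy]
  simp only [Matrix.mul_sub, Matrix.sub_mul, Matrix.trace_sub, Complex.sub_re]
  ring

theorem cfc_log_add_one (hσ : σ.IsHermitian) : cfc (fun x => Real.log x + 1) σ = matLog σ + 1 := by
  rw [cfc_add σ Real.log _ (Matrix.finite_real_spectrum.continuousOn _),
    cfc_const_one ℝ σ hσ.isSelfAdjoint, matLog]

theorem re_trace_sub_le_relEntropy (hρ : ρ.PosSemidef) (hσ : σ.PosDef) :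
    (ρ - σ).trace.re ≤ relEntropy ρ σ := by
  have klein := klein_inequality hρ.isHermitian hσ.isHermitian
    (f := fun x => x * Real.log x) (f' := fun x => Real.log x + 1) (by
      rw [hρ.isHermitian.spectrum_real_eq_range_eigenvalues,
        hσ.isHermitian.spectrum_real_eq_range_eigenvalues]
      rintro _ ⟨i, rfl⟩ _ ⟨j, rfl⟩
      exact mul_log_add_sub_mul_log_add_one_le (hρ.eigenvalues_nonneg i) (hσ.eigenvalues_pos j))
  have bregman := vNEntropy_sub_vNEntropy hρ.isHermitian hσ.isHermitian
  rw [vNEntropy_eq_neg_re_trace_cfc_mul_log, vNEntropy_eq_neg_re_trace_cfc_mul_log] at bregman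
  rw [cfc_log_add_one hσ.isHermitian, mul_add, mul_one, Matrix.trace_add, map_add] at klein
  simp only [RCLike.re_eq_complex_re] at klein
  linarith

theorem relEntropy_nonneg (hρ : ρ.PosSemidef) (hσ : σ.PosDef) (htr : σ.trace ≤ ρ.trace) :
    0 ≤ relEntropy ρ σ := by
  have hre : 0 ≤ (ρ - σ).trace.re := by
    rw [Matrix.trace_sub, Complex.sub_re]
    exact sub_nonneg.2 (Complex.le_def.1 htr).1
  exact hre.trans (re_trace_sub_le_relEntropy hρ hσ)

end Entropy

section HolevoGap

variable {K n : Type*} [Fintype K] [Fintype n] [DecidableEq n]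

theorem holevo_gap_sub_holevo_gap (p : K → ℝ) {σ τ : K → Matrix n n ℂ}
    (hσ : ∀ x, (σ x).IsHermitian) (hτ : ∀ x, (τ x).IsHermitian) :
    (vNEntropy (∑ x, p x • σ x) - ∑ x, p x * vNEntropy (σ x))
      - (vNEntropy (∑ x, p x • τ x) - ∑ x, p x * vNEntropy (τ x)) =
      ∑ x, p x * relEntropy (σ x) (τ x) - relEntropy (∑ x, p x • σ x) (∑ x, p x • τ x)
        + (∑ x, p x * ((σ x - τ x) * matLog (τ x)).trace.re
          - ∑ x, p x * ((σ x - τ x) * matLog (∑ y, p y • τ y)).trace.re) := by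
  have hσbar : (∑ x, p x • σ x).IsHermitian :=
    isSelfAdjoint_sum _ fun x _ => (IsSelfAdjoint.all (p x)).smul (hσ x).isSelfAdjoint
  have hτbar : (∑ x, p x • τ x).IsHermitian :=
    isSelfAdjoint_sum _ fun x _ => (IsSelfAdjoint.all (p x)).smul (hτ x).isSelfAdjoint
  have average : ∑ x, p x * vNEntropy (σ x) - ∑ x, p x * vNEntropy (τ x) =
      -∑ x, p x * relEntropy (σ x) (τ x)
        - ∑ x, p x * ((σ x - τ x) * matLog (τ x)).trace.re := by
    simp only [← Finset.sum_sub_distrib, ← Finset.sum_neg_distrib, ← mul_sub,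
      vNEntropy_sub_vNEntropy (hσ _) (hτ _)]
    exact Finset.sum_congr rfl fun x _ => by ring
  have linear : ((∑ x, p x • σ x - ∑ x, p x • τ x) * matLog (∑ y, p y • τ y)).trace.re =
      ∑ x, p x * ((σ x - τ x) * matLog (∑ y, p y • τ y)).trace.re := by
    simp [← Finset.sum_sub_distrib, ← smul_sub, Finset.sum_mul, Matrix.trace_sum]
  linarith [vNEntropy_sub_vNEntropy hσbar hτbar]

theorem holevo_gap_le_avg_relEntropy_general (p : K → ℝ) (σ τ : K → Matrix n n ℂ)
    (hσ : ∀ x, (σ x).PosSemidef) (hτ : ∀ x, (τ x).PosDef)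
    (hσbar : (∑ x, p x • σ x).PosSemidef) (hτbar : (∑ x, p x • τ x).PosDef)
    (htr : (∑ x, p x • τ x).trace ≤ (∑ x, p x • σ x).trace)
    (hlog : ∑ x, p x * ((σ x - τ x) * matLog (τ x)).trace.re ≤
      ∑ x, p x * ((σ x - τ x) * matLog (∑ y, p y • τ y)).trace.re) :
    (vNEntropy (∑ x, p x • σ x) - ∑ x, p x * vNEntropy (σ x))
      - (vNEntropy (∑ x, p x • τ x) - ∑ x, p x * vNEntropy (τ x))
      ≤ ∑ x, p x * relEntropy (σ x) (τ x) := by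
  rw [holevo_gap_sub_holevo_gap p (fun x => (hσ x).isHermitian) fun x => (hτ x).isHermitian]
  linarith [relEntropy_nonneg hσbar hτbar htr]

end HolevoGap

/-- If for every `x` the trace term `Re tr((σ_x − τ_x) log τ_x)` is unchanged when `log τ_x`
is replaced by `log τ̄`, then the difference of Holevo-type entropy gaps is bounded by the
average relative entropy. -/
theorem holevo_gap_le_avg_relEntropy
    {K : Type*} [Fintype K] [Nonempty K] {n : Type*} [Fintype n] [DecidableEq n]
    (p : K → ℝ) (hp0 : ∀ x, 0 ≤ p x) (hp1 : ∑ x, p x = 1)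
    (σ τ : K → Matrix n n ℂ)
    (hσpos : ∀ x, (σ x).PosDef) (hσtr : ∀ x, (σ x).trace = 1)
    (hτpos : ∀ x, (τ x).PosDef) (hτtr : ∀ x, (τ x).trace = 1)
    (hσbar : (∑ x, p x • σ x).PosDef) (hτbar : (∑ x, p x • τ x).PosDef)
    (htrace : ∀ x,
      (Matrix.trace ((σ x - τ x) * matLog (τ x))).re =
      (Matrix.trace ((σ x - τ x) * matLog (∑ y, p y • τ y))).re) :
    (vNEntropy (∑ x, p x • σ x) - ∑ x, p x * vNEntropy (σ x))
      - (vNEntropy (∑ x, p x • τ x) - ∑ x, p x * vNEntropy (τ x))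
      ≤ ∑ x, p x * relEntropy (σ x) (τ x) := by
  exact holevo_gap_le_avg_relEntropy_general p σ τ (fun x => (hσpos x).posSemidef) hτpos
    hσbar.posSemidef hτbar (by simp [Matrix.trace_sum, hσtr, hτtr]) (by simp [htrace])
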